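/- For every nonnegative integer n, b'₅(20n+15) ≡ 0 (mod 4). -/

import Mathlib

/-- `b5' n` is the number of partitions of `n` into distinct parts,
none of which is divisible by `5` (with `b5' 0 = 1`). -/
def b5' (n : ℕ) : ℕ :=
  ((Nat.Partition.distincts n).filter (fun p => ∀ i ∈ p.parts, ¬ (5 ∣ i))).card

/-!
Write `f(a, b)` for Ramanujan's theta function, `φ(q) = f(q, q)`, `E_k = (X^k; X^k)_∞`, and
`B = ∑ n, b5' (5 n) X^n`. By the Jacobi triple product the generating function of `b5'` is
`f(X, X⁴) f(X², X³) / E₅²`, whose 5-dissection gives `B = f(X², X³)² / E₁²`. As `(-a; q) ≡ (a; q)`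
modulo 2, comparing products and squaring yields `B E₅² g² ≡ f(X, X⁴)²` modulo 4, where `g` is a
series in `X²`. Now multiply by `φ(X⁵) E₁₀`, which turns `E₅²` into the square of a series in `X²`.
On the right, the 2-dissection `f(X, X⁴)² = f(X², X⁸) φ(X⁵) + X f(X⁷, X³) f(X¹⁰, 1)`, together with
`φ² ≡ 1` modulo 4 and `f(X¹⁰, 1) E₁₀ = 2 E₂₀²`, gives
`B G(X²)² ≡ f(X², X⁸) E₁₀ + 2 X f(X⁷, X³) E₂₀²` modulo 4, with `G` a unit.
After division by `G(X²)²`, the first term is a series in `X²`. In the second, only the class modulo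
2 of the factor `1 / G(X²)²` matters, and this is a series in `X⁴`; so the exponents `≡ 3` modulo 4
could only come from `X f(X⁷, X³)`, whose exponents `5 t² + 2 t + 1 ≡ (t + 1)²` are never `3`
modulo 4.
-/

open Finset Finset.Nat PowerSeries Filter Topology
open scoped PowerSeries.WithPiTopology

/-- The `t`-th triangular number `t (t + 1) / 2`, for an integer index `t`; it is nonnegative, so it
is encoded as a natural number in order to serve as an exponent. -/
def tri (t : ℤ) : ℕ := (t * (t + 1) / 2).toNat

theorem two_mul_tri (t : ℤ) : 2 * (tri t : ℤ) = t * (t + 1) := by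
  have hnonneg : 0 ≤ t * (t + 1) := by
    rcases le_or_gt 0 t with h | h
    · positivity
    · exact mul_nonneg_of_nonpos_of_nonpos h.le h
  rw [tri, Int.toNat_of_nonneg (by lia)]
  exact Int.two_mul_ediv_two_of_even (Int.even_mul_succ_self t)

theorem natAbs_le_tri_add_one (t : ℤ) : t.natAbs ≤ tri t + 1 := by
  have h := two_mul_tri t
  rcases abs_cases t with ⟨ht, h0⟩ | ⟨ht, h0⟩ <;> zify <;> rw [ht] <;> nlinarith

section GaussBinom

variable {R : Type*} [CommRing R]

/-- The Gaussian binomial coefficient `[j + k choose j]` at `p`, in symmetric indexing: the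
generating function, by size, of the partitions fitting inside a `j × k` box. -/
def gaussBinom (p : R) : ℕ → ℕ → R
  | 0, _ => 1
  | _ + 1, 0 => 1
  | j + 1, k + 1 => gaussBinom p (j + 1) k + p ^ (k + 1) * gaussBinom p j (k + 1)

@[simp]
theorem gaussBinom_zero_left (p : R) (k : ℕ) : gaussBinom p 0 k = 1 := by
  rw [gaussBinom]

@[simp]
theorem gaussBinom_zero_right (p : R) (j : ℕ) : gaussBinom p j 0 = 1 := by
  cases j <;> rw [gaussBinom]

theorem gaussBinom_succ_succ (p : R) (j k : ℕ) :
    gaussBinom p (j + 1) (k + 1) =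
      gaussBinom p (j + 1) k + p ^ (k + 1) * gaussBinom p j (k + 1) := by
  rw [gaussBinom]

theorem one_sub_pow_mul_gaussBinom (p : R) (j k : ℕ) :
    (1 - p ^ (j + 1)) * gaussBinom p (j + 1) k = (1 - p ^ (k + 1)) * gaussBinom p j (k + 1) := by
  induction j generalizing k with
  | zero =>
    induction k with
    | zero => simp
    | succ k ih =>
      simp only [gaussBinom_succ_succ, gaussBinom_zero_left] at ih ⊢
      linear_combination ih
  | succ j ihj =>
    induction k with
    | zero =>
      have h := ihj 0
      simp only [gaussBinom_succ_succ, gaussBinom_zero_right] at h ⊢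
      linear_combination p * h
    | succ k ihk =>
      rw [gaussBinom_succ_succ p (j + 1) k, gaussBinom_succ_succ p j (k + 1)]
      linear_combination ihk + p ^ (k + 2) * ihj (k + 1)

theorem gaussBinom_succ_succ' (p : R) (j k : ℕ) :
    gaussBinom p (j + 1) (k + 1) =
      gaussBinom p j (k + 1) + p ^ (j + 1) * gaussBinom p (j + 1) k := by
  linear_combination gaussBinom_succ_succ p j k + one_sub_pow_mul_gaussBinom p j k

theorem gaussBinom_mul_prod (p : R) (j k : ℕ) :
    gaussBinom p j k * ∏ i ∈ range k, (1 - p ^ (i + 1)) =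
      ∏ i ∈ range k, (1 - p ^ (j + i + 1)) := by
  induction k generalizing j with
  | zero => simp
  | succ k ih =>
    rw [prod_range_succ, prod_range_succ']
    have := ih (j + 1)
    simp only [add_right_comm j 1, add_zero, ← add_assoc] at this ⊢
    rw [← this]
    linear_combination -(∏ i ∈ range k, (1 - p ^ (i + 1))) * one_sub_pow_mul_gaussBinom p j k

theorem sum_antidiagonal_succ_gaussBinom_mul (p : R) (f : ℕ → R) (N : ℕ) :
    ∑ x ∈ antidiagonal (N + 1), gaussBinom p x.1 x.2 * f x.1 =
      ∑ x ∈ antidiagonal N, gaussBinom p x.1 x.2 * (f x.1 + p ^ x.2 * f (x.1 + 1)) := by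
  cases N with
  | zero => simp [sum_antidiagonal_succ]
  | succ N =>
    simp only [mul_add, sum_add_distrib]
    rw [sum_antidiagonal_succ (n := N + 1), sum_antidiagonal_succ' (n := N),
      sum_antidiagonal_succ (n := N), sum_antidiagonal_succ' (n := N)]
    simp only [gaussBinom_succ_succ, gaussBinom_zero_left, gaussBinom_zero_right, add_mul,
      sum_add_distrib, mul_assoc, mul_left_comm _ (p ^ _)]
    ring

theorem sum_antidiagonal_succ_gaussBinom_mul' (p : R) (f : ℕ → R) (N : ℕ) :
    ∑ x ∈ antidiagonal (N + 1), gaussBinom p x.1 x.2 * f x.1 =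
      ∑ x ∈ antidiagonal N, gaussBinom p x.1 x.2 * (p ^ x.1 * f x.1 + f (x.1 + 1)) := by
  cases N with
  | zero => simp [sum_antidiagonal_succ]
  | succ N =>
    simp only [mul_add, sum_add_distrib]
    rw [sum_antidiagonal_succ (n := N + 1), sum_antidiagonal_succ' (n := N),
      sum_antidiagonal_succ (n := N), sum_antidiagonal_succ' (n := N)]
    simp only [gaussBinom_succ_succ', gaussBinom_zero_left, gaussBinom_zero_right, add_mul,
      sum_add_distrib, mul_assoc, mul_left_comm _ (p ^ _)]
    ring

end GaussBinom

section ThetaTerm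

variable {R : Type*} [CommRing R]

/-- The general term `a ^ (t (t + 1) / 2) * b ^ (t (t - 1) / 2)` of Ramanujan's theta series. -/
def thetaTerm (a b : R) (t : ℤ) : R := a ^ tri t * b ^ tri (-t)

theorem thetaTerm_neg (a b : R) (t : ℤ) : thetaTerm a b (-t) = thetaTerm b a t := by
  rw [thetaTerm, thetaTerm, neg_neg, mul_comm]

theorem thetaTerm_X_pow (i j : ℕ) (t : ℤ) :
    thetaTerm (X ^ i : R⟦X⟧) (X ^ j) t = X ^ (i * tri t + j * tri (-t)) := by
  rw [thetaTerm, ← pow_mul, ← pow_mul, ← pow_add]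

theorem pow_mul_thetaTerm_add_one (a b : R) {m k : ℕ} {t : ℤ} (h : (m : ℤ) = k + t) :
    (a * b) ^ k * thetaTerm a b (t + 1) = a * (a * b) ^ m * thetaTerm a b t := by
  have ha : k + tri (t + 1) = 1 + m + tri t := by
    zify; linarith [two_mul_tri t, two_mul_tri (t + 1)]
  have hb : k + tri (-(t + 1)) = m + tri (-t) := by
    zify; linarith [two_mul_tri (-t), two_mul_tri (-(t + 1))]
  calc (a * b) ^ k * thetaTerm a b (t + 1) = a ^ (k + tri (t + 1)) * b ^ (k + tri (-(t + 1))) := by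
        rw [thetaTerm]; ring
    _ = a ^ (1 + m + tri t) * b ^ (m + tri (-t)) := by rw [ha, hb]
    _ = a * (a * b) ^ m * thetaTerm a b t := by rw [thetaTerm]; ring

theorem pow_mul_thetaTerm_sub_one (a b : R) {n j : ℕ} {t : ℤ} (h : (j : ℤ) = n + t) :
    (a * b) ^ j * thetaTerm a b (t - 1) = b * (a * b) ^ n * thetaTerm a b t := by
  have := pow_mul_thetaTerm_add_one b a (m := n) (k := j) (t := -t) (by lia)
  rwa [thetaTerm_neg, neg_add_eq_sub, ← neg_sub, thetaTerm_neg, mul_comm b a] at this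

theorem prod_mul_prod_eq_sum_gaussBinom_mul_thetaTerm (a b : R) (m n : ℕ) :
    (∏ i ∈ range m, (1 + a * (a * b) ^ i)) * ∏ i ∈ range n, (1 + b * (a * b) ^ i) =
      ∑ x ∈ antidiagonal (m + n),
        gaussBinom (a * b) x.1 x.2 * thetaTerm a b (x.1 - n) := by
  induction m with
  | zero =>
    induction n with
    | zero => simp [thetaTerm, tri]
    | succ n ih =>
      rw [prod_range_succ, ← mul_assoc, ih, ← add_assoc,
        sum_antidiagonal_succ_gaussBinom_mul' _ fun j ↦ thetaTerm a b (j - (n + 1 : ℕ)),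
        sum_mul]
      refine sum_congr rfl fun x _ ↦ ?_
      have := pow_mul_thetaTerm_sub_one a b (n := n) (j := x.1) (t := x.1 - n) (by lia)
      push_cast
      rw [← sub_sub, this, add_sub_add_right_eq_sub]
      ring
  | succ m ih =>
    rw [prod_range_succ, mul_right_comm, ih, add_right_comm,
      sum_antidiagonal_succ_gaussBinom_mul _ fun j ↦ thetaTerm a b (j - n), sum_mul]
    refine sum_congr rfl fun x hx ↦ ?_
    have hmn := mem_antidiagonal.mp hx
    have := pow_mul_thetaTerm_add_one a b (m := m) (k := x.2) (t := x.1 - n) (by lia)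
    push_cast
    rw [add_sub_right_comm, this]
    ring

theorem thetaTerm_add_mul_thetaTerm_sub (a c : R) (u v : ℤ) :
    thetaTerm a (a * c) (u + v) * thetaTerm a (a * c) (u - v) =
      thetaTerm (a ^ 2) (a ^ 2 * c ^ 2) u * thetaTerm (a ^ 2 * c) (a ^ 2 * c) v := by
  have ha : tri (u + v) + tri (-(u + v)) + tri (u - v) + tri (-(u - v)) =
      2 * tri u + 2 * tri (-u) + 2 * tri v + 2 * tri (-v) := by
    zify
    linarith [two_mul_tri (u + v), two_mul_tri (-(u + v)), two_mul_tri (u - v),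
      two_mul_tri (-(u - v)), two_mul_tri u, two_mul_tri (-u), two_mul_tri v, two_mul_tri (-v)]
  have hc : tri (-(u + v)) + tri (-(u - v)) = 2 * tri (-u) + tri v + tri (-v) := by
    zify
    linarith [two_mul_tri (-(u + v)), two_mul_tri (-(u - v)), two_mul_tri (-u), two_mul_tri v,
      two_mul_tri (-v)]
  calc thetaTerm a (a * c) (u + v) * thetaTerm a (a * c) (u - v)
      = a ^ (tri (u + v) + tri (-(u + v)) + tri (u - v) + tri (-(u - v))) *
          c ^ (tri (-(u + v)) + tri (-(u - v))) := by simp only [thetaTerm]; ring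
    _ = a ^ (2 * tri u + 2 * tri (-u) + 2 * tri v + 2 * tri (-v)) *
          c ^ (2 * tri (-u) + tri v + tri (-v)) := by rw [ha, hc]
    _ = _ := by simp only [thetaTerm]; ring

theorem thetaTerm_add_add_one_mul_thetaTerm_sub (a c : R) (u v : ℤ) :
    thetaTerm a (a * c) (u + v + 1) * thetaTerm a (a * c) (u - v) =
      a * (thetaTerm (a ^ 4 * c) c u * thetaTerm (a ^ 4 * c ^ 2) 1 v) := by
  have ha : tri (u + v + 1) + tri (-(u + v + 1)) + tri (u - v) + tri (-(u - v)) =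
      1 + 4 * tri u + 4 * tri v := by
    zify
    linarith [two_mul_tri (u + v + 1), two_mul_tri (-(u + v + 1)), two_mul_tri (u - v),
      two_mul_tri (-(u - v)), two_mul_tri u, two_mul_tri v]
  have hc : tri (-(u + v + 1)) + tri (-(u - v)) = tri u + tri (-u) + 2 * tri v := by
    zify
    linarith [two_mul_tri (-(u + v + 1)), two_mul_tri (-(u - v)), two_mul_tri u,
      two_mul_tri (-u), two_mul_tri v]
  calc thetaTerm a (a * c) (u + v + 1) * thetaTerm a (a * c) (u - v)
      = a ^ (tri (u + v + 1) + tri (-(u + v + 1)) + tri (u - v) + tri (-(u - v))) *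
          c ^ (tri (-(u + v + 1)) + tri (-(u - v))) := by simp only [thetaTerm]; ring
    _ = a ^ (1 + 4 * tri u + 4 * tri v) * c ^ (tri u + tri (-u) + 2 * tri v) := by rw [ha, hc]
    _ = _ := by simp only [thetaTerm, one_pow]; ring

theorem X_pow_dvd_thetaTerm {a b : R⟦X⟧} (h : X ∣ a * b) (t : ℤ) :
    X ^ (t.natAbs - 1) ∣ thetaTerm a b t := by
  have ha : t.natAbs - 1 ≤ tri t := by have := natAbs_le_tri_add_one t; lia
  have hb : t.natAbs - 1 ≤ tri (-t) := by have := natAbs_le_tri_add_one (-t); lia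
  refine (pow_dvd_pow_of_dvd h _).trans ?_
  rw [mul_pow]
  exact mul_dvd_mul (pow_dvd_pow a ha) (pow_dvd_pow b hb)

theorem finite_not_X_pow_dvd_thetaTerm {a b : R⟦X⟧} (h : X ∣ a * b) (n : ℕ) :
    {t | ¬ X ^ n ∣ thetaTerm a b t}.Finite := by
  refine (Set.finite_Icc (-n : ℤ) n).subset fun t ht ↦ ?_
  by_contra hlt
  refine ht ((pow_dvd_pow X ?_).trans (X_pow_dvd_thetaTerm h t))
  rw [Set.mem_Icc] at hlt
  lia

end ThetaTerm

section Topology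

theorem hasProd_prod_range_of_residues {M : Type*} [CommMonoid M] [TopologicalSpace M]
    [ContinuousMul M] {m : ℕ} (hm : m ≠ 0) {f g : ℕ → M}
    (h : ∀ r < m, HasProd (fun k ↦ f (m * k + r)) (g r)) :
    HasProd f (∏ r ∈ range m, g r) := by
  have hclass (r : ℕ) (hr : r ∈ range m) : HasProd (Set.mulIndicator {n | n % m = r} f) (g r) := by
    have hinj : Function.Injective fun k ↦ m * k + r := fun k l hkl ↦ by simpa [hm] using hkl
    have hr' : ∀ k, (m * k + r) % m = r := fun k ↦ by
      rw [Nat.mul_add_mod, Nat.mod_eq_of_lt (mem_range.mp hr)]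
    rw [← hinj.hasProd_iff]
    · simpa [Function.comp_def, hr'] using h r (mem_range.mp hr)
    · intro n hn
      refine Set.mulIndicator_of_notMem (fun hnr ↦ hn ⟨n / m, ?_⟩) f
      rw [← Set.mem_ofPred.mp hnr]
      exact Nat.div_add_mod n m
  convert! hasProd_prod hclass with n
  simp [Set.mulIndicator_apply, Nat.mod_lt _ (Nat.pos_of_ne_zero hm)]

variable {R : Type*} [CommRing R] [TopologicalSpace R]

theorem isClosed_setOf_X_pow_dvd [T1Space R] (n : ℕ) : IsClosed {F : R⟦X⟧ | X ^ n ∣ F} := by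
  simp only [X_pow_dvd_iff, Set.ofPred_forall]
  exact isClosed_iInter fun m ↦ isClosed_iInter fun _ ↦
    isClosed_singleton.preimage (WithPiTopology.continuous_coeff R m)

theorem summable_of_finite_not_X_pow_dvd {ι : Type*} {f : ι → R⟦X⟧}
    (h : ∀ n, {i | ¬ X ^ n ∣ f i}.Finite) : Summable f := by
  refine (WithPiTopology.summable_iff_summable_coeff R).mpr fun n ↦
    summable_of_hasFiniteSupport ((h (n + 1)).subset fun i hi hdvd ↦ hi ?_)
  exact X_pow_dvd_iff.mp hdvd n n.lt_succ_self

theorem tendsto_of_X_pow_dvd_sub {f g : ℕ → R⟦X⟧} {L : R⟦X⟧} (h : ∀ m, X ^ m ∣ f m - g m)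
    (hf : Tendsto f atTop (𝓝 L)) : Tendsto g atTop (𝓝 L) := by
  rw [WithPiTopology.tendsto_iff_coeff_tendsto] at hf ⊢
  refine fun n ↦ (hf n).congr' ?_
  filter_upwards [eventually_gt_atTop n] with m hm
  simpa [sub_eq_zero] using X_pow_dvd_iff.mp (h m) n hm

theorem continuous_of_continuous_coeff {Y : Type*} [TopologicalSpace Y] {f : Y → R⟦X⟧}
    (h : ∀ n, Continuous fun y ↦ coeff n (f y)) : Continuous f :=
  continuous_iff_continuousAt.mpr fun y ↦
    (WithPiTopology.tendsto_iff_coeff_tendsto R f _ _).mpr fun n ↦ (h n).tendsto y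

theorem continuous_expand_powerSeries {d : ℕ} (hd : d ≠ 0) :
    Continuous (expand d hd : R⟦X⟧ → R⟦X⟧) := by
  refine continuous_of_continuous_coeff fun n ↦ ?_
  simp only [coeff_expand]
  split_ifs
  · exact WithPiTopology.continuous_coeff R _
  · exact continuous_const

theorem continuous_map_powerSeries {S : Type*} [CommRing S] [TopologicalSpace S] {φ : R →+* S}
    (hφ : Continuous φ) : Continuous (PowerSeries.map φ) := by
  refine continuous_of_continuous_coeff fun n ↦ ?_
  simpa only [coeff_map, Function.comp_def] using hφ.comp (WithPiTopology.continuous_coeff R n)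

end Topology

section Divisibility

variable {R : Type*} [CommRing R]

theorem dvd_prod_sub_one {ι : Type*} {d : R} {f : ι → R} {s : Finset ι}
    (h : ∀ i ∈ s, d ∣ f i - 1) : d ∣ ∏ i ∈ s, f i - 1 :=
  prod_induction f (fun x ↦ d ∣ x - 1)
    (fun x y hx hy ↦ by simpa using dvd_mul_sub_mul hx hy) (by simp) h

theorem natCast_dvd_iff_forall_dvd_coeff (m : ℕ) {F : R⟦X⟧} :
    (m : R⟦X⟧) ∣ F ↔ ∀ n, (m : R) ∣ coeff n F := by
  rw [← map_natCast C]
  constructor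
  · rintro ⟨G, rfl⟩ n
    exact ⟨coeff n G, coeff_C_mul n G _⟩
  · intro h
    choose c hc using h
    refine ⟨mk c, ?_⟩
    ext n
    rw [hc, coeff_C_mul, coeff_mk]

theorem natCast_dvd_iff_map_eq_zero (m : ℕ) {F : ℤ⟦X⟧} :
    (m : ℤ⟦X⟧) ∣ F ↔ PowerSeries.map (Int.castRingHom (ZMod m)) F = 0 := by
  simp [natCast_dvd_iff_forall_dvd_coeff, PowerSeries.ext_iff, ZMod.intCast_zmod_eq_zero_iff_dvd]

theorem expand_zmod_eq_pow (p : ℕ) [Fact p.Prime] (F : (ZMod p)⟦X⟧) :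
    expand p (NeZero.ne p) F = F ^ p := by
  have h := MvPowerSeries.map_frobenius_expand p (NeZero.ne p) (f := F)
  rwa [ZMod.frobenius_zmod, MvPowerSeries.map_id] at h

theorem natCast_dvd_pow_sub_expand (p : ℕ) [Fact p.Prime] (F : ℤ⟦X⟧) :
    (p : ℤ⟦X⟧) ∣ F ^ p - expand p (NeZero.ne p) F := by
  rw [natCast_dvd_iff_map_eq_zero, map_sub, map_pow, map_expand, expand_zmod_eq_pow, sub_self]

end Divisibility

section QPochhammer

variable {R : Type*} [CommRing R] [TopologicalSpace R]

/-- The infinite `q`-Pochhammer symbol `(a; q)_∞ = ∏ i ≥ 0, (1 - a q ^ i)`, for power series `a` and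
`q`; the product converges when `q` has no constant term. -/
noncomputable def qPochhammer (a q : R⟦X⟧) : R⟦X⟧ := ∏' i : ℕ, (1 - a * q ^ i)

theorem multipliable_one_sub_mul_pow (a : R⟦X⟧) {q : R⟦X⟧} (hq : X ∣ q) :
    Multipliable fun i : ℕ ↦ 1 - a * q ^ i := by
  simp only [sub_eq_add_neg]
  refine WithPiTopology.multipliable_one_add_of_tendsto_order_atTop_nhds_top R
    (ENat.tendsto_nhds_top_iff_natCast_lt.mpr fun n ↦ ?_)
  filter_upwards [eventually_gt_atTop n] with i hi
  rw [order_neg, order_eq_emultiplicity_X]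
  exact (Nat.cast_lt.mpr hi).trans_le
    (pow_dvd_iff_le_emultiplicity.mp ((pow_dvd_pow_of_dvd hq i).mul_left a))

theorem hasProd_qPochhammer (a : R⟦X⟧) {q : R⟦X⟧} (hq : X ∣ q) :
    HasProd (fun i : ℕ ↦ 1 - a * q ^ i) (qPochhammer a q) :=
  (multipliable_one_sub_mul_pow a hq).hasProd

theorem map_qPochhammer {S : Type*} [CommRing S] [TopologicalSpace S] [T2Space S]
    (φ : R⟦X⟧ →+* S⟦X⟧) (hφ : Continuous φ) (a : R⟦X⟧) {q : R⟦X⟧} (hq : X ∣ q) :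
    φ (qPochhammer a q) = qPochhammer (φ a) (φ q) := by
  rw [qPochhammer, (multipliable_one_sub_mul_pow a hq).map_tprod φ hφ]
  simp [qPochhammer]

theorem expand_qPochhammer [T2Space R] {d : ℕ} (hd : d ≠ 0) (a : R⟦X⟧) {q : R⟦X⟧} (hq : X ∣ q) :
    expand d hd (qPochhammer a q) = qPochhammer (expand d hd a) (expand d hd q) :=
  map_qPochhammer (expand d hd).toRingHom (continuous_expand_powerSeries hd) a hq

theorem natCast_dvd_qPochhammer_sub {m : ℕ} {a b q : ℤ⟦X⟧} (hq : X ∣ q)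
    (hab : (m : ℤ⟦X⟧) ∣ a - b) : (m : ℤ⟦X⟧) ∣ qPochhammer a q - qPochhammer b q := by
  have hcont : Continuous (PowerSeries.map (Int.castRingHom (ZMod m))) :=
    continuous_map_powerSeries continuous_of_discreteTopology
  rw [natCast_dvd_iff_map_eq_zero, map_sub, sub_eq_zero] at hab ⊢
  rw [map_qPochhammer _ hcont _ hq, map_qPochhammer _ hcont _ hq, hab]

theorem two_dvd_qPochhammer_neg_sub (a : ℤ⟦X⟧) {q : ℤ⟦X⟧} (hq : X ∣ q) :
    2 ∣ qPochhammer (-a) q - qPochhammer a q :=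
  mod_cast natCast_dvd_qPochhammer_sub (m := 2) hq ⟨-a, by push_cast; ring⟩

variable [T2Space R] [IsTopologicalRing R]

theorem prod_mul_qPochhammer (a : R⟦X⟧) {q : R⟦X⟧} (hq : X ∣ q) (n : ℕ) :
    (∏ i ∈ range n, (1 - a * q ^ i)) * qPochhammer (a * q ^ n) q = qPochhammer a q := by
  simp only [qPochhammer, mul_assoc, ← pow_add, add_comm n]
  refine Multipliable.prod_mul_tprod_nat_mul' (f := fun i ↦ 1 - a * q ^ i) ?_
  simpa only [mul_assoc, ← pow_add, add_comm n] using multipliable_one_sub_mul_pow (a * q ^ n) hq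

theorem qPochhammer_eq_one_sub_mul (a : R⟦X⟧) {q : R⟦X⟧} (hq : X ∣ q) :
    qPochhammer a q = (1 - a) * qPochhammer (a * q) q := by
  simpa using (prod_mul_qPochhammer a hq 1).symm

theorem qPochhammer_mul_qPochhammer_neg (a : R⟦X⟧) {q : R⟦X⟧} (hq : X ∣ q) :
    qPochhammer a q * qPochhammer (-a) q = qPochhammer (a ^ 2) (q ^ 2) := by
  refine ((hasProd_qPochhammer a hq).mul (hasProd_qPochhammer (-a) hq)).unique ?_
  convert! hasProd_qPochhammer (a ^ 2) (hq.trans (dvd_pow_self q two_ne_zero)) using 2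
  ring

theorem prod_qPochhammer_pow {m : ℕ} (hm : m ≠ 0) (a : R⟦X⟧) {q : R⟦X⟧} (hq : X ∣ q) :
    ∏ r ∈ range m, qPochhammer (a * q ^ r) (q ^ m) = qPochhammer a q := by
  refine (hasProd_prod_range_of_residues hm fun r _ ↦ ?_).unique (hasProd_qPochhammer a hq)
  convert! hasProd_qPochhammer (a * q ^ r) (hq.trans (dvd_pow_self q hm)) using 2
  ring

theorem X_pow_dvd_qPochhammer_sub_one {a q : R⟦X⟧} {n : ℕ} (hq : X ∣ q) (ha : X ^ n ∣ a) :
    X ^ n ∣ qPochhammer a q - 1 :=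
  ((isClosed_setOf_X_pow_dvd n).preimage (continuous_id.sub continuous_const)).mem_of_tendsto
    (hasProd_qPochhammer a hq).tendsto_prod_nat <| Eventually.of_forall fun m ↦
      dvd_prod_sub_one fun i _ ↦ by simpa using ha.mul_right _

theorem isUnit_qPochhammer {a q : R⟦X⟧} (ha : X ∣ a) (hq : X ∣ q) : IsUnit (qPochhammer a q) := by
  have h := X_pow_dvd_qPochhammer_sub_one (n := 1) hq (by simpa using ha)
  rw [pow_one, X_dvd_iff, map_sub, map_one, sub_eq_zero] at h
  simp [isUnit_iff_constantCoeff, h]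

theorem X_pow_dvd_qPochhammer_mul_gaussBinom_sub_one {p : R⟦X⟧} (hp : X ∣ p) {n j k : ℕ}
    (hj : n ≤ j + 1) (hk : n ≤ k + 1) : X ^ n ∣ qPochhammer p p * gaussBinom p j k - 1 := by
  have hpow {m : ℕ} (hm : n ≤ m) : X ^ n ∣ p ^ m :=
    (pow_dvd_pow X hm).trans (pow_dvd_pow_of_dvd hp m)
  have hprod : qPochhammer p p * gaussBinom p j k =
      (∏ i ∈ range k, (1 - p ^ (j + i + 1))) * qPochhammer (p * p ^ k) p := by
    rw [← gaussBinom_mul_prod, ← prod_mul_qPochhammer p hp k]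
    simp only [← pow_succ']
    ring
  have hfin : X ^ n ∣ ∏ i ∈ range k, (1 - p ^ (j + i + 1)) - 1 :=
    dvd_prod_sub_one fun i _ ↦ by simpa using hpow (by lia)
  have htail : X ^ n ∣ qPochhammer (p * p ^ k) p - 1 :=
    X_pow_dvd_qPochhammer_sub_one hp (by simpa only [← pow_succ'] using hpow hk)
  simpa only [hprod, mul_one] using dvd_mul_sub_mul hfin htail

end QPochhammer

section RamanujanTheta

theorem sum_antidiagonal_sub_eq_sum_Icc {M : Type*} [AddCommMonoid M] (f : ℤ → M) (m : ℕ) :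
    ∑ x ∈ antidiagonal (m + m), f (x.1 - m) = ∑ t ∈ Icc (-m : ℤ) m, f t := by
  refine sum_bij' (fun x _ ↦ (x.1 : ℤ) - m) (fun t _ ↦ ((m + t).toNat, (m - t).toNat))
    ?_ ?_ ?_ ?_ (fun _ _ ↦ rfl)
  all_goals simp only [HasAntidiagonal.mem_antidiagonal, mem_Icc, Prod.ext_iff]; lia

theorem injective_add_add_sub (k : ℤ) :
    Function.Injective fun x : ℤ × ℤ ↦ (x.1 + x.2 + k, x.1 - x.2) := fun x y hxy ↦ by
  simp only [Prod.ext_iff] at hxy ⊢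
  lia

theorem isCompl_range_add_sub : IsCompl
    (Set.range fun x : ℤ × ℤ ↦ (x.1 + x.2 + 0, x.1 - x.2))
    (Set.range fun x : ℤ × ℤ ↦ (x.1 + x.2 + 1, x.1 - x.2)) := by
  refine ⟨Set.disjoint_left.mpr ?_, codisjoint_iff_le_sup.mpr ?_⟩
  · rintro _ ⟨x, rfl⟩ ⟨y, hy⟩
    have := Prod.ext_iff.mp hy
    dsimp only at this
    lia
  · rintro ⟨s, t⟩ -
    rcases Int.even_or_odd' (s + t) with ⟨k, hk | hk⟩
    · exact .inl ⟨(k, s - k), Prod.ext (by dsimp only; lia) (by dsimp only; lia)⟩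
    · exact .inr ⟨(k, s - k - 1), Prod.ext (by dsimp only; lia) (by dsimp only; lia)⟩

variable {R : Type*} [CommRing R] [TopologicalSpace R]

/-- Ramanujan's general theta function
`f(a, b) = ∑ t : ℤ, a ^ (t (t + 1) / 2) * b ^ (t (t - 1) / 2)`, for power series `a` and `b`; the
sum converges when `a * b` has no constant term. -/
noncomputable def ramanujanTheta (a b : R⟦X⟧) : R⟦X⟧ := ∑' t : ℤ, thetaTerm a b t

theorem summable_thetaTerm {a b : R⟦X⟧} (h : X ∣ a * b) : Summable (thetaTerm a b) :=
  summable_of_finite_not_X_pow_dvd (finite_not_X_pow_dvd_thetaTerm h)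

theorem hasSum_ramanujanTheta {a b : R⟦X⟧} (h : X ∣ a * b) :
    HasSum (thetaTerm a b) (ramanujanTheta a b) :=
  (summable_thetaTerm h).hasSum

theorem expand_ramanujanTheta [T2Space R] {d : ℕ} (hd : d ≠ 0) {a b : R⟦X⟧} (h : X ∣ a * b) :
    expand d hd (ramanujanTheta a b) = ramanujanTheta (expand d hd a) (expand d hd b) := by
  rw [ramanujanTheta,
    (summable_thetaTerm h).map_tsum (expand d hd) (continuous_expand_powerSeries hd)]
  simp [ramanujanTheta, thetaTerm]

variable [T2Space R] [IsTopologicalRing R]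

/-- The Jacobi triple product identity. -/
theorem ramanujanTheta_eq_qPochhammer {a b : R⟦X⟧} (h : X ∣ a * b) :
    ramanujanTheta a b =
      qPochhammer (a * b) (a * b) * qPochhammer (-a) (a * b) * qPochhammer (-b) (a * b) := by
  have hprod : Tendsto (fun m ↦ qPochhammer (a * b) (a * b) *
      (∏ i ∈ range m, (1 - -a * (a * b) ^ i)) * ∏ i ∈ range m, (1 - -b * (a * b) ^ i)) atTop
      (𝓝 (qPochhammer (a * b) (a * b) * qPochhammer (-a) (a * b) * qPochhammer (-b) (a * b))) :=
    ((tendsto_const_nhds.mul (hasProd_qPochhammer (-a) h).tendsto_prod_nat).mul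
      (hasProd_qPochhammer (-b) h).tendsto_prod_nat)
  have hsum : Tendsto (fun m : ℕ ↦ ∑ t ∈ Icc (-m : ℤ) m, thetaTerm a b t) atTop
      (𝓝 (ramanujanTheta a b)) := (hasSum_ramanujanTheta h).comp tendsto_Icc_neg
  refine tendsto_nhds_unique hsum (tendsto_of_X_pow_dvd_sub (fun m ↦ ?_) hprod)
  simp only [neg_mul, sub_neg_eq_add]
  rw [mul_assoc, prod_mul_prod_eq_sum_gaussBinom_mul_thetaTerm, mul_sum,
    ← sum_antidiagonal_sub_eq_sum_Icc, ← sum_sub_distrib]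
  refine dvd_sum fun x hx ↦ ?_
  have hx' := mem_antidiagonal.mp hx
  set t : ℤ := x.1 - m
  have hbinom : X ^ (m + 1 - t.natAbs) ∣
      qPochhammer (a * b) (a * b) * gaussBinom (a * b) x.1 x.2 - 1 :=
    X_pow_dvd_qPochhammer_mul_gaussBinom_sub_one h (by lia) (by lia)
  rw [← mul_assoc, ← sub_one_mul]
  refine dvd_trans ?_ (mul_dvd_mul hbinom (X_pow_dvd_thetaTerm h t))
  rw [← pow_add]
  exact pow_dvd_pow X (by lia)

theorem ramanujanTheta_one_mul_qPochhammer {x : R⟦X⟧} (hx : X ∣ x) :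
    ramanujanTheta x 1 * qPochhammer x x = 2 * qPochhammer (x ^ 2) (x ^ 2) ^ 2 := by
  rw [ramanujanTheta_eq_qPochhammer (hx.mul_right 1), mul_one,
    qPochhammer_eq_one_sub_mul (-1) hx, neg_one_mul, ← qPochhammer_mul_qPochhammer_neg x hx]
  ring

theorem ramanujanTheta_self_mul_qPochhammer_sq {x : R⟦X⟧} (hx : X ∣ x) :
    ramanujanTheta x x * (qPochhammer x x ^ 2 * qPochhammer (x ^ 2) (x ^ 2)) =
      (qPochhammer (x ^ 2) (x ^ 4) * qPochhammer (x ^ 2) (x ^ 2) ^ 2) ^ 2 := by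
  have hx2 : X ∣ x ^ 2 := hx.trans (dvd_pow_self x two_ne_zero)
  have hsplit : qPochhammer x (x ^ 2) * qPochhammer (x ^ 2) (x ^ 2) = qPochhammer x x := by
    simpa only [prod_range_succ, prod_range_zero, one_mul, pow_zero, mul_one, pow_one, ← sq]
      using prod_qPochhammer_pow two_ne_zero x hx
  have hneg : qPochhammer x (x ^ 2) * qPochhammer (-x) (x ^ 2) = qPochhammer (x ^ 2) (x ^ 4) := by
    rw [qPochhammer_mul_qPochhammer_neg x hx2, ← pow_mul]
  rw [ramanujanTheta_eq_qPochhammer (hx.mul_right x), ← hsplit, ← hneg, ← sq]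
  ring

theorem two_dvd_ramanujanTheta_self_sub_one {a : R⟦X⟧} (h : X ∣ a) :
    2 ∣ ramanujanTheta a a - 1 := by
  have haa : X ∣ a * a := h.mul_right a
  have hnat : Summable fun n : ℕ ↦ thetaTerm a a n :=
    summable_of_finite_not_X_pow_dvd fun n ↦
      (finite_not_X_pow_dvd_thetaTerm haa n).preimage Nat.cast_injective.injOn
  have hfold := tsum_nat_add_neg (summable_thetaTerm haa)
  simp only [thetaTerm_neg, ← two_mul] at hfold
  rw [hnat.tsum_mul_left, ← ramanujanTheta] at hfold
  have h0 : thetaTerm a a 0 = 1 := by simp [thetaTerm, tri]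
  exact ⟨∑' n : ℕ, thetaTerm a a n - 1, by linear_combination -hfold - h0⟩

theorem hasSum_mul_ramanujanTheta {a b c d : R⟦X⟧} (hab : X ∣ a * b) (hcd : X ∣ c * d) :
    HasSum (fun x : ℤ × ℤ ↦ thetaTerm a b x.1 * thetaTerm c d x.2)
      (ramanujanTheta a b * ramanujanTheta c d) := by
  refine (hasSum_ramanujanTheta hab).mul (hasSum_ramanujanTheta hcd) ?_
  refine summable_of_finite_not_X_pow_dvd fun n ↦
    ((finite_not_X_pow_dvd_thetaTerm hab n).prod (finite_not_X_pow_dvd_thetaTerm hcd n)).subset ?_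
  exact fun x hx ↦ ⟨fun h ↦ hx (h.mul_right _), fun h ↦ hx (h.mul_left _)⟩

theorem ramanujanTheta_sq {a : R⟦X⟧} (c : R⟦X⟧) (ha : X ∣ a) :
    ramanujanTheta a (a * c) ^ 2 =
      ramanujanTheta (a ^ 2) (a ^ 2 * c ^ 2) * ramanujanTheta (a ^ 2 * c) (a ^ 2 * c) +
        a * (ramanujanTheta (a ^ 4 * c) c * ramanujanTheta (a ^ 4 * c ^ 2) 1) := by
  have ha2 : X ∣ a ^ 2 := ha.trans (dvd_pow_self a two_ne_zero)
  have ha4 : X ∣ a ^ 4 := ha.trans (dvd_pow_self a four_ne_zero)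
  let f (x : ℤ × ℤ) : R⟦X⟧ := thetaTerm a (a * c) x.1 * thetaTerm a (a * c) x.2
  have hf : HasSum f (ramanujanTheta a (a * c) ^ 2) := by
    rw [sq]
    exact hasSum_mul_ramanujanTheta (ha.mul_right _) (ha.mul_right _)
  have heven : HasSum (f ∘ fun x : ℤ × ℤ ↦ (x.1 + x.2 + 0, x.1 - x.2))
      (ramanujanTheta (a ^ 2) (a ^ 2 * c ^ 2) * ramanujanTheta (a ^ 2 * c) (a ^ 2 * c)) := by
    simp only [f, Function.comp_def, add_zero, thetaTerm_add_mul_thetaTerm_sub]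
    exact hasSum_mul_ramanujanTheta (ha2.mul_right _) ((ha2.mul_right c).mul_right _)
  have hodd : HasSum (f ∘ fun x : ℤ × ℤ ↦ (x.1 + x.2 + 1, x.1 - x.2))
      (a * (ramanujanTheta (a ^ 4 * c) c * ramanujanTheta (a ^ 4 * c ^ 2) 1)) := by
    simp only [f, Function.comp_def, thetaTerm_add_add_one_mul_thetaTerm_sub]
    exact (hasSum_mul_ramanujanTheta ((ha4.mul_right c).mul_right _)
      ((ha4.mul_right _).mul_right _)).mul_left a
  rw [← (injective_add_add_sub 0).hasSum_range_iff] at heven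
  rw [← (injective_add_add_sub 1).hasSum_range_iff] at hodd
  exact hf.unique (heven.add_isCompl isCompl_range_add_sub hodd)

end RamanujanTheta

section Multisection

variable {R : Type*} [CommRing R]

/-- The `r`-th component of the `m`-multisection of a power series: it extracts from
`∑ n, c n * X ^ n` the series `∑ n, c (m * n + r) * X ^ n`. -/
noncomputable def multisection (m r : ℕ) : R⟦X⟧ →ₗ[R] R⟦X⟧ where
  toFun F := mk fun n ↦ coeff (m * n + r) F
  map_add' F G := by ext; simp
  map_smul' c F := by ext; simp

@[simp]
theorem coeff_multisection (m r n : ℕ) (F : R⟦X⟧) :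
    coeff n (multisection m r F) = coeff (m * n + r) F :=
  coeff_mk n fun n ↦ coeff (m * n + r) F

theorem multisection_mul_expand {m r : ℕ} (hm : m ≠ 0) (hr : r < m) (F G : R⟦X⟧) :
    multisection m r (F * expand m hm G) = multisection m r F * G := by
  ext n
  simp only [coeff_multisection, coeff_mul]
  refine (sum_of_injOn (fun x ↦ (m * x.1 + r, m * x.2)) ?_ ?_ ?_ ?_).symm
  · intro x _ y _ hxy
    simpa [hm, Prod.ext_iff] using hxy
  · intro x hx
    simp only [mem_coe, HasAntidiagonal.mem_antidiagonal] at hx ⊢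
    rw [← hx]
    ring
  · rintro ⟨i, j⟩ hij hnot
    rw [HasAntidiagonal.mem_antidiagonal] at hij
    rw [coeff_expand_of_not_dvd, mul_zero]
    rintro ⟨k, rfl⟩
    have hk : k ≤ n := by
      have : m * k < m * (n + 1) := by lia
      exact Nat.lt_succ_iff.mp (lt_of_mul_lt_mul_left' this)
    refine hnot ⟨(n - k, k), by simp [hk], Prod.ext ?_ rfl⟩
    rw [← Nat.add_sub_of_le hk] at hij
    dsimp only
    lia
  · simp [coeff_expand_mul]

theorem multisection_natCast_mul (m r c : ℕ) (F : R⟦X⟧) :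
    multisection m r ((c : R⟦X⟧) * F) = (c : R⟦X⟧) * multisection m r F := by
  simp only [← nsmul_eq_mul, map_nsmul]

theorem multisection_X_pow_mul_add {m r : ℕ} (hm : m ≠ 0) (k : ℕ) :
    multisection m r (X ^ (m * k + r) : R⟦X⟧) = X ^ k := by
  ext n
  simp [coeff_X_pow, hm]

theorem multisection_X_pow_of_mod_ne {m r k : ℕ} (hr : r < m) (hk : k % m ≠ r) :
    multisection m r (X ^ k : R⟦X⟧) = 0 := by
  ext n
  rw [coeff_multisection, coeff_X_pow, if_neg, map_zero]
  rintro rfl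
  exact hk (by rw [Nat.mul_add_mod, Nat.mod_eq_of_lt hr])

theorem multisection_expand_of_ne {d m r : ℕ} (hd : d ≠ 0) (hdm : d ∣ m) (hr : ¬ d ∣ r)
    (F : R⟦X⟧) : multisection m r (expand d hd F) = 0 := by
  ext n
  rw [coeff_multisection, coeff_expand_of_not_dvd, map_zero]
  rwa [Nat.dvd_add_right (hdm.mul_right n)]

theorem four_dvd_multisection_four_three {B U Y W G : ℤ⟦X⟧} (hG : IsUnit G)
    (hY : multisection 4 3 Y = 0)
    (h : 4 ∣ B * expand 2 two_ne_zero (G ^ 2) -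
      (expand 2 two_ne_zero U + 2 * (Y * expand 4 four_ne_zero W))) :
    4 ∣ multisection 4 3 B := by
  obtain ⟨H, hGH⟩ := hG.exists_right_inv
  obtain ⟨V, hV⟩ := natCast_dvd_pow_sub_expand 2 H
  obtain ⟨Z, hZ⟩ := h
  have hinv : expand 2 two_ne_zero (G ^ 2) * expand 2 two_ne_zero (H ^ 2) = 1 := by
    rw [← map_mul, ← mul_pow, hGH, one_pow, map_one]
  have hsq : expand 2 two_ne_zero (H ^ 2) =
      expand 4 four_ne_zero H + 2 * expand 2 two_ne_zero V := by
    rw [sub_eq_iff_eq_add'.mp hV, map_add, ← expand_mul, map_mul, map_natCast, Nat.cast_ofNat]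
  have hB : B = expand 2 two_ne_zero (U * H ^ 2) +
      ((2 : ℕ) : ℤ⟦X⟧) * (Y * expand 4 four_ne_zero (W * H)) +
      ((4 : ℕ) : ℤ⟦X⟧) * (Z * expand 2 two_ne_zero (H ^ 2) +
        Y * expand 4 four_ne_zero W * expand 2 two_ne_zero V) := by
    simp only [map_mul]
    push_cast
    linear_combination (-B) * hinv + expand 2 two_ne_zero (H ^ 2) * hZ +
      2 * Y * expand 4 four_ne_zero W * hsq
  rw [hB, map_add, map_add, multisection_expand_of_ne two_ne_zero (by simp) (by simp),
    multisection_natCast_mul, multisection_natCast_mul,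
    multisection_mul_expand four_ne_zero (by simp), hY]
  simp

variable [TopologicalSpace R]

theorem continuous_multisection (m r : ℕ) : Continuous (multisection m r : R⟦X⟧ → R⟦X⟧) :=
  continuous_of_continuous_coeff fun n ↦ by
    simpa only [coeff_multisection] using WithPiTopology.continuous_coeff R (m * n + r)

theorem hasSum_multisection_X_pow {ι κ : Type*} {m r : ℕ} (hr : r < m) {e : ι → ℕ} {F : R⟦X⟧}
    (hF : HasSum (fun i ↦ X ^ e i) F) {g : κ → ι} (hg : Function.Injective g) {e' : κ → ℕ}
    (hge : ∀ k, e (g k) = m * e' k + r) (hrange : ∀ i, e i % m = r → i ∈ Set.range g) :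
    HasSum (fun k ↦ X ^ e' k) (multisection m r F) := by
  have h := hF.map (multisection m r) (continuous_multisection m r)
  rw [← hg.hasSum_iff] at h
  · simpa only [Function.comp_def, hge, multisection_X_pow_mul_add (Nat.ne_zero_of_lt hr)] using h
  · intro i hi
    rw [Function.comp_apply, multisection_X_pow_of_mod_ne hr (mt (hrange i) hi)]

variable [T2Space R] [IsTopologicalRing R]

theorem multisection_ramanujanTheta_X_one_four_mul_X_two_three :
    multisection 5 0 (ramanujanTheta (X ^ 1 : R⟦X⟧) (X ^ 4) * ramanujanTheta (X ^ 2) (X ^ 3)) =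
      ramanujanTheta (X ^ 2) (X ^ 3) ^ 2 := by
  have hX14 : X ∣ (X ^ 1 * X ^ 4 : R⟦X⟧) := (dvd_pow_self X one_ne_zero).mul_right _
  have hX23 : X ∣ (X ^ 2 * X ^ 3 : R⟦X⟧) := (dvd_pow_self X two_ne_zero).mul_right _
  have hprod := hasSum_mul_ramanujanTheta hX14 hX23
  have hsq := hasSum_mul_ramanujanTheta hX23 hX23
  simp only [thetaTerm_X_pow, ← pow_add] at hprod hsq
  rw [sq (ramanujanTheta _ _)]
  refine (hasSum_multisection_X_pow (show 0 < 5 by simp) hprod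
    (g := fun x : ℤ × ℤ ↦ (x.1 + 2 * x.2, 2 * x.1 - x.2)) ?_ ?_ ?_).unique hsq
  · intro x y hxy
    simp only [Prod.ext_iff] at hxy ⊢
    lia
  · intro x
    zify
    linarith [two_mul_tri (x.1 + 2 * x.2), two_mul_tri (-(x.1 + 2 * x.2)),
      two_mul_tri (2 * x.1 - x.2), two_mul_tri (-(2 * x.1 - x.2)), two_mul_tri x.1,
      two_mul_tri (-x.1), two_mul_tri x.2, two_mul_tri (-x.2)]
  · rintro ⟨s, t⟩ hst
    have hdiv : (5 : ℤ) ∣ 2 * s - t := by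
      dsimp only at hst
      have hs := two_mul_tri s
      have hs' := two_mul_tri (-s)
      have ht := two_mul_tri t
      have ht' := two_mul_tri (-t)
      ring_nf at hs hs' ht ht'
      lia
    obtain ⟨k, hk⟩ := hdiv
    exact ⟨(s - 2 * k, k), Prod.ext (by dsimp only; lia) (by dsimp only; lia)⟩

theorem multisection_four_three_X_mul_ramanujanTheta :
    multisection 4 3 (X * ramanujanTheta (X ^ 7 : R⟦X⟧) (X ^ 3)) = 0 := by
  have hsum := (hasSum_ramanujanTheta (R := R)
    ((dvd_pow_self X three_ne_zero).mul_left (X ^ 7))).mul_left X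
  simp only [thetaTerm_X_pow, ← pow_succ'] at hsum
  refine (hasSum_multisection_X_pow (show 3 < 4 by simp) hsum (g := Empty.elim)
    (e' := Empty.elim) (Function.injective_of_subsingleton _) (fun x ↦ x.elim)
    fun t ht ↦ ?_).unique hasSum_empty
  have hexp : (7 * tri t + 3 * tri (-t) + 1 : ℤ) = 4 * (t ^ 2) + (t + 1) ^ 2 := by
    linarith [two_mul_tri t, two_mul_tri (-t)]
  rcases Int.even_or_odd' (t + 1) with ⟨k, hk | hk⟩ <;> rw [hk] at hexp <;> ring_nf at hexp <;> lia

end Multisection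

section EulerProd

variable {R : Type*} [CommRing R] [TopologicalSpace R]

/-- Euler's product `(X ^ k; X ^ k)_∞`, written `f_k` or `E_k` in the theory of partitions. -/
noncomputable def eulerProd (k : ℕ) : R⟦X⟧ := qPochhammer (X ^ k) (X ^ k)

variable [T2Space R]

theorem expand_qPochhammer_X_pow {d i k : ℕ} (hd : d ≠ 0) (hk : k ≠ 0) :
    expand d hd (qPochhammer (X ^ i : R⟦X⟧) (X ^ k)) =
      qPochhammer (X ^ (d * i)) (X ^ (d * k)) := by
  rw [expand_qPochhammer hd _ (dvd_pow_self X hk)]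
  simp only [map_pow, expand_X, pow_mul]

theorem expand_eulerProd {d k : ℕ} (hd : d ≠ 0) (hk : k ≠ 0) :
    expand d hd (eulerProd k : R⟦X⟧) = eulerProd (d * k) :=
  expand_qPochhammer_X_pow hd hk

theorem expand_ramanujanTheta_X_one_four :
    expand 2 two_ne_zero (ramanujanTheta (X ^ 1 : R⟦X⟧) (X ^ 4)) =
      ramanujanTheta (X ^ 2) (X ^ 8) := by
  rw [expand_ramanujanTheta _ ((dvd_pow_self X one_ne_zero).mul_right _)]
  simp only [map_pow, expand_X, ← pow_mul, Nat.reduceMul]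

variable [IsTopologicalRing R]

theorem isUnit_eulerProd {k : ℕ} (hk : k ≠ 0) : IsUnit (eulerProd k : R⟦X⟧) :=
  isUnit_qPochhammer (dvd_pow_self X hk) (dvd_pow_self X hk)

theorem ramanujanTheta_X_pow_eq {i j k : ℕ} (hij : i + j = k) (hk : k ≠ 0) :
    ramanujanTheta (X ^ i : R⟦X⟧) (X ^ j) =
      eulerProd k * qPochhammer (-X ^ i) (X ^ k) * qPochhammer (-X ^ j) (X ^ k) := by
  have hmul : (X ^ i * X ^ j : R⟦X⟧) = X ^ k := by rw [← pow_add, hij]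
  rw [ramanujanTheta_eq_qPochhammer (by rw [hmul]; exact dvd_pow_self X hk), hmul, eulerProd]

theorem ramanujanTheta_X_one_four_sq_mul :
    ramanujanTheta (X ^ 1 : R⟦X⟧) (X ^ 4) ^ 2 * eulerProd 10 =
      ramanujanTheta (X ^ 2) (X ^ 8) * ramanujanTheta (X ^ 5) (X ^ 5) * eulerProd 10 +
        2 * (X * ramanujanTheta (X ^ 7) (X ^ 3) * eulerProd 20 ^ 2) := by
  have hsq := ramanujanTheta_sq (X ^ 3) (dvd_refl (X : R⟦X⟧))
  have hone := ramanujanTheta_one_mul_qPochhammer (dvd_pow_self (X : R⟦X⟧) (n := 10) (by simp))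
  simp only [← pow_mul, ← pow_add, ← pow_succ', Nat.reduceAdd, Nat.reduceMul] at hsq hone
  rw [pow_one, hsq, eulerProd, eulerProd]
  linear_combination X * ramanujanTheta (X ^ 7) (X ^ 3) * hone

end EulerProd

section GeneratingFunction

variable (R : Type*) [CommRing R] [TopologicalSpace R] [T2Space R]

theorem hasProd_mk_card_distincts_filter (P : ℕ → Prop) [DecidablePred P] :
    HasProd (fun i ↦ if P (i + 1) then 1 + X ^ (i + 1) else 1)
      (mk fun n ↦ (#{p ∈ Nat.Partition.distincts n | ∀ i ∈ p.parts, P i} : R)) := by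
  convert! Nat.Partition.hasProd_genFun (fun i c ↦ if P i ∧ c = 1 then (1 : R) else 0) using 1
  · ext1 i
    by_cases h : P (i + 1)
    · rw [if_pos h, tsum_eq_single 0]
      · simp [h]
      · intro j hj
        simp [hj]
    · simp [h]
  · have hiff (n : ℕ) (π : n.Partition) : (π.parts.Nodup ∧ ∀ i ∈ π.parts, P i) ↔
        ∀ i ∈ (Multiset.toFinsupp π.parts).support, P i ∧ Multiset.toFinsupp π.parts i = 1 := by
      simp only [Multiset.toFinsupp_support, Multiset.mem_toFinset, Multiset.toFinsupp_apply,
        Multiset.nodup_iff_count_eq_one, ← forall₂_and, and_comm]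
    simp_rw [Nat.Partition.genFun, Nat.Partition.distincts, filter_filter, card_filter,
      Finsupp.prod, prod_boole, hiff]
    simp

variable [IsTopologicalRing R]

theorem mk_b5'_eq_prod_qPochhammer :
    (mk fun n ↦ (b5' n : R)) = ∏ r ∈ range 4, qPochhammer (-X ^ (r + 1)) (X ^ 5) := by
  let g (r : ℕ) : R⟦X⟧ := if r = 4 then 1 else qPochhammer (-X ^ (r + 1)) (X ^ 5)
  have hresidue (r : ℕ) (hr : r < 5) :
      HasProd (fun k ↦ if ¬ 5 ∣ 5 * k + r + 1 then 1 + X ^ (5 * k + r + 1) else 1) (g r) := by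
    by_cases h4 : r = 4
    · have hdvd (k : ℕ) : 5 ∣ 5 * k + 4 + 1 := by lia
      simp only [g, h4, hdvd, not_true_eq_false, if_true, if_false, hasProd_one]
    · have hndvd (k : ℕ) : ¬ 5 ∣ 5 * k + r + 1 := by lia
      have h := hasProd_qPochhammer (-X ^ (r + 1) : R⟦X⟧) (dvd_pow_self X (n := 5) (by simp))
      simp only [g, h4, hndvd, not_false_eq_true, if_true, if_false]
      convert! h using 2 with k
      ring
  have hprod : (mk fun n ↦ (b5' n : R)) = ∏ r ∈ range 5, g r :=
    (hasProd_mk_card_distincts_filter R fun i ↦ ¬ 5 ∣ i).unique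
      (hasProd_prod_range_of_residues (by simp) hresidue)
  rw [hprod, prod_range_succ, show g 4 = 1 from if_pos rfl, mul_one]
  exact prod_congr rfl fun r hr ↦ if_neg (mem_range.mp hr).ne

theorem mk_b5'_mul_expand_eulerProd_sq :
    (mk fun n ↦ (b5' n : R)) * expand 5 (by simp) (eulerProd 1 ^ 2) =
      ramanujanTheta (X ^ 1) (X ^ 4) * ramanujanTheta (X ^ 2) (X ^ 3) := by
  rw [mk_b5'_eq_prod_qPochhammer, map_pow, expand_eulerProd _ one_ne_zero, mul_one,
    ramanujanTheta_X_pow_eq (k := 5) rfl (by simp), ramanujanTheta_X_pow_eq (k := 5) rfl (by simp)]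
  simp only [prod_range_succ, prod_range_zero, zero_add, one_mul, Nat.reduceAdd]
  ring

theorem mk_b5'_five_mul_mul_eulerProd_sq :
    (mk fun n ↦ (b5' (5 * n) : R)) * eulerProd 1 ^ 2 = ramanujanTheta (X ^ 2) (X ^ 3) ^ 2 := by
  have hmk : multisection 5 0 (mk fun n ↦ (b5' n : R)) = mk fun n ↦ (b5' (5 * n) : R) := by
    ext n
    simp
  rw [← hmk, ← multisection_mul_expand (by simp) (by simp), mk_b5'_mul_expand_eulerProd_sq,
    multisection_ramanujanTheta_X_one_four_mul_X_two_three]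

end GeneratingFunction

section ModFour

theorem two_dvd_ramanujanTheta_X_two_three_sub :
    2 ∣ ramanujanTheta (X ^ 2 : ℤ⟦X⟧) (X ^ 3) *
        (eulerProd 5 * (qPochhammer (X ^ 2) (X ^ 10) * qPochhammer (X ^ 8) (X ^ 10))) -
      ramanujanTheta (X ^ 1) (X ^ 4) * eulerProd 1 := by
  have hq : (X : ℤ⟦X⟧) ∣ X ^ 5 := dvd_pow_self X (by simp)
  have hsplit : qPochhammer (X ^ 1 : ℤ⟦X⟧) (X ^ 5) * qPochhammer (X ^ 2) (X ^ 5) *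
      qPochhammer (X ^ 3) (X ^ 5) * qPochhammer (X ^ 4) (X ^ 5) * eulerProd 5 = eulerProd 1 := by
    have h := prod_qPochhammer_pow (m := 5) (by simp) (X : ℤ⟦X⟧) dvd_rfl
    simpa only [prod_range_succ, prod_range_zero, one_mul, ← pow_succ', zero_add, Nat.reduceAdd,
      eulerProd, pow_one] using h
  have hneg₁ := qPochhammer_mul_qPochhammer_neg (X ^ 1 : ℤ⟦X⟧) hq
  have hneg₄ := qPochhammer_mul_qPochhammer_neg (X ^ 4 : ℤ⟦X⟧) hq
  simp only [← pow_mul, Nat.reduceMul] at hneg₁ hneg₄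
  have hmod := dvd_mul_sub_mul (two_dvd_qPochhammer_neg_sub (X ^ 2) hq)
    (two_dvd_qPochhammer_neg_sub (X ^ 3) hq)
  rw [ramanujanTheta_X_pow_eq (k := 5) rfl (by simp),
    ramanujanTheta_X_pow_eq (k := 5) rfl (by simp), ← hsplit, ← hneg₁, ← hneg₄]
  refine (hmod.mul_left (eulerProd 5 ^ 2 * (qPochhammer (X ^ 1) (X ^ 5) *
    qPochhammer (-X ^ 1) (X ^ 5) * (qPochhammer (X ^ 4) (X ^ 5) *
      qPochhammer (-X ^ 4) (X ^ 5))))).trans (dvd_of_eq ?_)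
  ring

theorem four_dvd_mk_b5'_five_mul_mul_sub_ramanujanTheta_sq :
    4 ∣ (mk fun n ↦ (b5' (5 * n) : ℤ)) *
        (eulerProd 5 * (qPochhammer (X ^ 2) (X ^ 10) * qPochhammer (X ^ 8) (X ^ 10))) ^ 2 -
      ramanujanTheta (X ^ 1) (X ^ 4) ^ 2 := by
  have hsq := dvd_sub_pow_of_dvd_sub (p := 2) (mod_cast two_dvd_ramanujanTheta_X_two_three_sub) 1
  norm_num only [mul_pow, ← mk_b5'_five_mul_mul_eulerProd_sq] at hsq
  refine ((isUnit_eulerProd one_ne_zero).pow 2).dvd_mul_right.mp (hsq.trans (dvd_of_eq ?_))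
  ring

theorem four_dvd_ramanujanTheta_X_one_four_sq_mul_sub :
    4 ∣ ramanujanTheta (X ^ 1 : ℤ⟦X⟧) (X ^ 4) ^ 2 *
        (ramanujanTheta (X ^ 5) (X ^ 5) * eulerProd 10) -
      (ramanujanTheta (X ^ 2) (X ^ 8) * eulerProd 10 +
        2 * (X * ramanujanTheta (X ^ 7) (X ^ 3) * eulerProd 20 ^ 2)) := by
  obtain ⟨K, hK⟩ : 2 ∣ ramanujanTheta (X ^ 5 : ℤ⟦X⟧) (X ^ 5) - 1 :=
    two_dvd_ramanujanTheta_self_sub_one (dvd_pow_self X (by simp))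
  refine ⟨ramanujanTheta (X ^ 2) (X ^ 8) * eulerProd 10 * (K ^ 2 + K) +
    X * ramanujanTheta (X ^ 7) (X ^ 3) * eulerProd 20 ^ 2 * K, ?_⟩
  have hsq := ramanujanTheta_X_one_four_sq_mul (R := ℤ)
  rw [sub_eq_iff_eq_add.mp hK] at hsq ⊢
  linear_combination (2 * K + 1) * hsq

theorem exists_isUnit_four_dvd_mk_b5'_five_mul_mul_expand_sub :
    ∃ G : ℤ⟦X⟧, IsUnit G ∧ 4 ∣ (mk fun n ↦ (b5' (5 * n) : ℤ)) * expand 2 two_ne_zero (G ^ 2) -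
      (expand 2 two_ne_zero (ramanujanTheta (X ^ 1) (X ^ 4) * eulerProd 5) +
        2 * (X * ramanujanTheta (X ^ 7) (X ^ 3) * expand 4 four_ne_zero (eulerProd 5 ^ 2))) := by
  have hunit {i k : ℕ} (hi : i ≠ 0) (hk : k ≠ 0) : IsUnit (qPochhammer (X ^ i : ℤ⟦X⟧) (X ^ k)) :=
    isUnit_qPochhammer (dvd_pow_self X hi) (dvd_pow_self X hk)
  refine ⟨qPochhammer (X ^ 1) (X ^ 5) * qPochhammer (X ^ 4) (X ^ 5) *
    qPochhammer (X ^ 5) (X ^ 10) * eulerProd 5 ^ 2,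
    (((hunit (by simp) (by simp)).mul (hunit (by simp) (by simp))).mul
      (hunit (by simp) (by simp))).mul ((isUnit_eulerProd (by simp)).pow 2), ?_⟩
  have hφ := ramanujanTheta_self_mul_qPochhammer_sq (dvd_pow_self (X : ℤ⟦X⟧) (n := 5) (by simp))
  have hsum := (four_dvd_mk_b5'_five_mul_mul_sub_ramanujanTheta_sq.mul_left
    (ramanujanTheta (X ^ 5) (X ^ 5) * eulerProd 10)).add
      four_dvd_ramanujanTheta_X_one_four_sq_mul_sub
  simp only [map_mul, map_pow, expand_qPochhammer_X_pow _ (show 5 ≠ 0 by simp),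
    expand_qPochhammer_X_pow _ (show 10 ≠ 0 by simp), expand_ramanujanTheta_X_one_four,
    expand_eulerProd _ (show 5 ≠ 0 by simp), Nat.reduceMul]
  refine hsum.trans (dvd_of_eq ?_)
  simp only [eulerProd, ← pow_mul, Nat.reduceMul] at hφ ⊢
  linear_combination (mk fun n ↦ (b5' (5 * n) : ℤ)) *
    (qPochhammer (X ^ 2) (X ^ 10) * qPochhammer (X ^ 8) (X ^ 10)) ^ 2 * hφ

end ModFour

theorem b5'_20n15_mod4 (n : ℕ) : b5' (20 * n + 15) ≡ 0 [MOD 4] := by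
  obtain ⟨G, hG, hdissect⟩ := exists_isUnit_four_dvd_mk_b5'_five_mul_mul_expand_sub
  have hseries : ((4 : ℕ) : ℤ⟦X⟧) ∣ multisection 4 3 (mk fun n ↦ (b5' (5 * n) : ℤ)) :=
    four_dvd_multisection_four_three hG multisection_four_three_X_mul_ramanujanTheta hdissect
  have hcoeff := (natCast_dvd_iff_forall_dvd_coeff 4).mp hseries n
  rw [coeff_multisection, coeff_mk, Int.natCast_dvd_natCast] at hcoeff
  rw [show 20 * n + 15 = 5 * (4 * n + 3) by ring]
  exact Nat.modEq_zero_iff_dvd.mpr hcoeff
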